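/- Let (M_t)_{t∈[0,T]} be a continuous martingale with M_0 = L J₁ e^{-Tα} and quadratic variation satisfying ⟨M⟩(t) ≥ c ∫_0^t M(s)² ds with c = ζ₀σ²/L², where L,T,α,σ,ζ₀ > 0 and 0 < J₀e^{-Tα} < J₁e^{-Tα} < J₁ < J₂. Let τ be the first hitting time of {L J₀ e^{-Tα}, L J₂}. Then P(M(τ∧T) = L J₂) ≥ (J₁-J₀)/(J₂e^{Tα}-J₀) - ((J₂/J₀)e^{Tα} - J₁/J₀)·(L/(ζ₀^{1/2}σ))·T^{-1/2}. -/

import Mathlib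

open Real MeasureTheory

set_option maxHeartbeats 2000000 in
/-- One good step of the discretised supersolution. -/
lemma step_core (η y w v d k w' : ℝ) (hη : 0 < η) (hη1 : η ≤ 1) (hy : η < y) (hw : 0 < w)
    (hv : v = 1 - w * y / 2) (hvη : η < v) (hd : |d| ≤ η ^ 5 / 100) (hk : 0 ≤ k)
    (hk1 : k ≤ η ^ 5 / 100) (hww : w ≤ w')
    (hw' : w' ≤ w + w * (k * w ^ 2) / 2 * (1 + 8 * η ^ 3 / 100)) :
    0 < 1 - w' * (y - d) / 2 ∧ 1 - w' * (y - d) / 2 ≤ 1 ∧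
    v ^ 2 + v * w * d + w ^ 2 / 4 * (d ^ 2 - k) ≤ (1 - w' * (y - d) / 2) ^ 2 + η * k := by
  have hwy : w * y < 2 := by linarith
  have hwη : w * η ≤ 2 := by nlinarith
  have hw2 : w ^ 2 * η ^ 2 ≤ 4 := by nlinarith [mul_pos hw hη]
  have hw3 : w ^ 3 * η ^ 3 ≤ 8 := by
    have : w ^ 3 * η ^ 3 = (w * η) ^ 3 := by ring
    rw [this]
    calc (w * η) ^ 3 ≤ 2 ^ 3 := by gcongr
      _ = 8 := by norm_num
  obtain ⟨hd1, hd2⟩ := abs_le.mp hd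
  have hη5 : η ^ 5 ≤ η := by
    calc η ^ 5 ≤ η ^ 1 := pow_le_pow_of_le_one hη.le hη1 (by norm_num)
      _ = η := pow_one _
  have hη3 : η ^ 3 ≤ η := by
    calc η ^ 3 ≤ η ^ 1 := pow_le_pow_of_le_one hη.le hη1 (by norm_num)
      _ = η := pow_one _
  have hη2 : η ^ 2 ≤ η := by
    calc η ^ 2 ≤ η ^ 1 := pow_le_pow_of_le_one hη.le hη1 (by norm_num)
      _ = η := pow_one _
  have hη4 : η ^ 4 ≤ η := by
    calc η ^ 4 ≤ η ^ 1 := pow_le_pow_of_le_one hη.le hη1 (by norm_num)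
      _ = η := pow_one _
  set ρ := η ^ 5 / 100 with hρ
  have hρ0 : 0 < ρ := by positivity
  have hwρ : w * ρ ≤ η ^ 4 / 50 := by
    have : w * ρ = (w * η) * (η ^ 4 / 100) := by rw [hρ]; ring
    rw [this]; nlinarith [pow_pos hη 4]
  have hw2ρ : w ^ 2 * ρ ≤ η ^ 3 / 25 := by
    have : w ^ 2 * ρ = (w ^ 2 * η ^ 2) * (η ^ 3 / 100) := by rw [hρ]; ring
    rw [this]; nlinarith [pow_pos hη 3]
  have hw3ρ : w ^ 3 * ρ ≤ 8 * η ^ 2 / 100 := by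
    have : w ^ 3 * ρ = (w ^ 3 * η ^ 3) * (η ^ 2 / 100) := by rw [hρ]; ring
    rw [this]; nlinarith [pow_pos hη 2]
  have hy' : 0 < y - d := by linarith
  set e := w' - w with he
  have he0 : 0 ≤ e := by linarith
  have hκ : 8 * η ^ 3 / 100 ≤ 1 := by linarith
  have he1 : e ≤ w ^ 3 * k / 2 * (1 + 8 * η ^ 3 / 100) := by
    have : w * (k * w ^ 2) / 2 * (1 + 8 * η ^ 3 / 100)
      = w ^ 3 * k / 2 * (1 + 8 * η ^ 3 / 100) := by ring
    linarith
  have hw3k : 0 ≤ w ^ 3 * k := by positivity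
  have he2 : e ≤ w ^ 3 * k := by nlinarith
  have hwy' : w * (y - d) ≤ 3 := by nlinarith
  -- `e * (y - d) ≤ 3 w² k`
  have hey : e * (y - d) ≤ 3 * (w ^ 2 * k) := by
    calc e * (y - d) ≤ w ^ 3 * k * (y - d) := by gcongr
      _ = (w ^ 2 * k) * (w * (y - d)) := by ring
      _ ≤ (w ^ 2 * k) * 3 := by gcongr
      _ = _ := by ring
  have hey0 : 0 ≤ e * (y - d) := by positivity
  have hw2k : w ^ 2 * k ≤ η ^ 3 / 25 := le_trans (by gcongr) hw2ρ
  have hwd : |w * d| ≤ η ^ 4 / 50 := by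
    rw [abs_mul, abs_of_pos hw]; exact le_trans (by gcongr) hwρ
  obtain ⟨hwd1, hwd2⟩ := abs_le.mp hwd
  have hv' : 1 - w' * (y - d) / 2 = v + (w * d - e * (y - d)) / 2 := by rw [hv, he]; ring
  have hv1 : v < 1 := by rw [hv]; nlinarith [mul_pos hw (hη.trans hy)]
  refine ⟨?_, ?_, ?_⟩
  · rw [hv']; linarith
  · have : 0 < w' * (y - d) := mul_pos (by linarith) hy'
    linarith
  · rw [hv']
    have hvz : v * (w * y) ≤ 1 / 2 := by
      rw [hv]; nlinarith [sq_nonneg (w * y - 1)]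
    have hA : v * (e * (y - d)) ≤ w ^ 2 * k / 4 + η / 2 * k := by
      have h1 : v * (e * (y - d)) ≤
          v * ((w ^ 3 * k / 2 * (1 + 8 * η ^ 3 / 100)) * (y + ρ)) := by
        have : 0 < v := hη.trans hvη
        gcongr
        linarith
      have h2 : v * ((w ^ 3 * k / 2 * (1 + 8 * η ^ 3 / 100)) * (y + ρ))
          = (w ^ 2 * k / 2 * (1 + 8 * η ^ 3 / 100)) * (v * (w * y))
            + v * (w ^ 3 * ρ) * (k / 2 * (1 + 8 * η ^ 3 / 100)) := by ring
      have h3 : (w ^ 2 * k / 2 * (1 + 8 * η ^ 3 / 100)) * (v * (w * y))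
          ≤ (w ^ 2 * k / 2 * (1 + 8 * η ^ 3 / 100)) * (1 / 2) := by gcongr
      have h4 : v * (w ^ 3 * ρ) * (k / 2 * (1 + 8 * η ^ 3 / 100))
          ≤ 1 * (8 * η ^ 2 / 100) * (k / 2 * 2) := by
        gcongr
        linarith
      have h5 : (w ^ 2 * k / 2 * (1 + 8 * η ^ 3 / 100)) * (1 / 2)
          = w ^ 2 * k / 4 + (w ^ 2 * η ^ 2) * (k * η * 2 / 100) := by ring
      have h6 : (w ^ 2 * η ^ 2) * (k * η * 2 / 100) ≤ 4 * (k * η * 2 / 100) := by gcongr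
      have h7 : k * η ^ 2 ≤ k * η := by gcongr
      have h8 : 0 ≤ k * η := by positivity
      linarith
    have hB : (w * d) * (e * (y - d)) / 2 ≤ η / 2 * k := by
      have h1 : (w * d) * (e * (y - d)) ≤ (η ^ 4 / 50) * (3 * (w ^ 2 * k)) := by gcongr
      have h2 : (η ^ 4 / 50) * (3 * (w ^ 2 * k)) = (w ^ 2 * η ^ 2) * (η ^ 2 * k * 3 / 50) := by ring
      have h3 : (w ^ 2 * η ^ 2) * (η ^ 2 * k * 3 / 50) ≤ 4 * (η ^ 2 * k * 3 / 50) := by gcongr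
      have h7 : η ^ 2 * k ≤ η * k := by gcongr
      have h8 : 0 ≤ η * k := by positivity
      linarith
    have hI : (v + (w * d - e * (y - d)) / 2) ^ 2 = v ^ 2 + v * w * d - v * (e * (y - d))
        + w ^ 2 / 4 * d ^ 2 - (w * d) * (e * (y - d)) / 2 + (e * (y - d)) ^ 2 / 4 := by ring
    rw [hI]
    linarith [sq_nonneg (e * (y - d))]

lemma w_step (η u k : ℝ) (hη : 0 < η) (hη1 : η ≤ 1) (hu : η ^ 2 / 4 ≤ u)
    (hk : 0 ≤ k) (hk1 : k ≤ η ^ 5 / 100) :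
    0 < u - k ∧ (√u)⁻¹ ≤ (√(u - k))⁻¹ ∧
    (√(u - k))⁻¹ ≤ (√u)⁻¹ + (√u)⁻¹ * (k * (√u)⁻¹ ^ 2) / 2 * (1 + 8 * η ^ 3 / 100) := by
  have hη3 : η ^ 3 ≤ 1 := pow_le_one₀ hη.le hη1
  have hu0 : 0 < u := lt_of_lt_of_le (by positivity) hu
  have hk2 : k ≤ u * (4 * η ^ 3 / 100) := by
    calc k ≤ η ^ 2 / 4 * (4 * η ^ 3 / 100) := by linarith [show η ^ 2 / 4 * (4 * η ^ 3 / 100) = η ^ 5 / 100 by ring]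
      _ ≤ _ := by gcongr
  have huk : 0 < u - k := by nlinarith
  have h1 : (√u)⁻¹ ≤ (√(u - k))⁻¹ := by
    have := Real.sqrt_pos.mpr huk
    gcongr
    linarith
  refine ⟨huk, h1, ?_⟩
  set t := k / u with ht
  have hkt : k = u * t := by rw [ht]; field_simp
  have ht0 : 0 ≤ t := by positivity
  have ht1 : t ≤ 4 * η ^ 3 / 100 := by rw [ht, div_le_iff₀ hu0]; linarith
  have hs : (√u)⁻¹ ^ 2 = u⁻¹ := by rw [inv_pow, Real.sq_sqrt hu0.le]
  have hkw : k * (√u)⁻¹ ^ 2 = t := by rw [hs, ht]; rfl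
  rw [hkw]
  have e1 : (√u)⁻¹ + (√u)⁻¹ * t / 2 * (1 + 8 * η ^ 3 / 100)
      = (√u)⁻¹ * (1 + t / 2 * (1 + 8 * η ^ 3 / 100)) := by ring
  rw [e1]
  set f := 1 + t / 2 * (1 + 8 * η ^ 3 / 100) with hf
  have hf0 : 0 < f := by positivity
  have : √u ≤ f * √(u - k) := by
    rw [show f * √(u - k) = √(f ^ 2 * (u - k)) by
      rw [Real.sqrt_mul (by positivity), Real.sqrt_sq hf0.le]]
    apply Real.sqrt_le_sqrt
    have : 1 ≤ f ^ 2 * (1 - t) := by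
      set κ := 8 * η ^ 3 / 100 with hκ
      have hκ0 : 0 < κ := by positivity
      have htk : t ≤ κ / 2 := by rw [hκ]; linarith
      have hκ1 : κ ≤ 1 := by rw [hκ]; linarith
      have h2 : 1 + t * (1 + κ) ≤ f ^ 2 := by rw [hf]; nlinarith [sq_nonneg (t / 2 * (1 + κ))]
      have h3 : 1 ≤ (1 + t * (1 + κ)) * (1 - t) := by
        have : t * (t * (1 + κ)) ≤ t * κ := by
          gcongr
          nlinarith
        nlinarith
      have : 0 ≤ 1 - t := by linarith
      nlinarith
    rw [hkt]
    nlinarith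
  have hsu := Real.sqrt_pos.mpr hu0
  have hsuk := Real.sqrt_pos.mpr huk
  rw [inv_le_iff_one_le_mul₀ hsuk, inv_mul_eq_div, div_mul_eq_mul_div, le_div_iff₀ hsu]
  linarith

noncomputable def ww (c A : ℝ) : ℝ := (√(c - A))⁻¹
noncomputable def vv (b η c X A : ℝ) : ℝ := 1 - ww c A * (b + η - X) / 2
def OKst (a b η c X A : ℝ) : Prop := a + η < X ∧ X < b ∧ 0 < c - A ∧ η < vv b η c X A
def GoodSt (η X A X' A' : ℝ) : Prop := |X' - X| ≤ η ^ 5 / 100 ∧ A' - A ≤ η ^ 5 / 100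
def RunSt (a b η c : ℝ) (X A : ℕ → ℝ) : ℕ → Prop
  | 0 => OKst a b η c (X 0) (A 0)
  | (i + 1) => RunSt a b η c X A i ∧ GoodSt η (X i) (A i) (X (i + 1)) (A (i + 1)) ∧
      OKst a b η c (X (i + 1)) (A (i + 1))
noncomputable def pc (a b η c X A : ℝ) : ℝ :=
  1 / (b - a) + vv b η c X A * ww c A - 2 * (ww c A ^ 2 / 4) * X
noncomputable def qc (c A : ℝ) : ℝ := ww c A ^ 2 / 4
noncomputable def Phi (a b η c X A : ℝ) : ℝ := (X - a) / (b - a) + vv b η c X A ^ 2 - 1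

open Classical in
noncomputable def Ys (a b η c mT nT : ℝ) (X A : ℕ → ℝ) (i : ℕ) : ℝ :=
  if RunSt a b η c X A i then
    (pc a b η c (X i) (A i) * (X (i + 1) - X i)
      + qc c (A i) * ((X (i + 1) ^ 2 - A (i + 1)) - (X i ^ 2 - A i)))
    + (if GoodSt η (X i) (A i) (X (i + 1)) (A (i + 1)) then 0 else
      pc a b η c (X i) (A i) * (mT - X (i + 1))
      + qc c (A i) * (nT - (X (i + 1) ^ 2 - A (i + 1))))
  else 0

lemma ok_facts {a b η c X A : ℝ} (hη : 0 < η) (h : OKst a b η c X A) :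
    0 < ww c A ∧ ww c A * η < 2 ∧ η ^ 2 / 4 ≤ c - A ∧ vv b η c X A < 1 := by
  obtain ⟨h1, h2, h3, h4⟩ := h
  have hs := Real.sqrt_pos.mpr h3
  have hw : 0 < ww c A := inv_pos.mpr hs
  have hwy : ww c A * (b + η - X) < 2 := by unfold vv at h4; linarith
  have hwη : ww c A * η < 2 := by nlinarith
  refine ⟨hw, hwη, ?_, ?_⟩
  · have : η < 2 * √(c - A) := by
      unfold ww at hwη
      rw [inv_mul_eq_div, div_lt_iff₀ hs] at hwη
      exact hwη
    have h5 := Real.sq_sqrt h3.le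
    nlinarith
  · unfold vv
    have : 0 < ww c A * (b + η - X) := mul_pos hw (by linarith)
    linarith

lemma coef_bound {a b η c X A : ℝ} (hη : 0 < η) (ha : 0 < a) (hab : a < b)
    (h : OKst a b η c X A) :
    |pc a b η c X A| ≤ 1 / (b - a) + 2 / η + 2 * b / η ^ 2 + 1 / η ^ 2 ∧
    |qc c A| ≤ 1 / (b - a) + 2 / η + 2 * b / η ^ 2 + 1 / η ^ 2 := by
  obtain ⟨hw, hwη, hu, hv1⟩ := ok_facts hη h
  obtain ⟨h1, h2, h3, h4⟩ := h
  have hb : 0 < b := ha.trans hab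
  have hba : 0 < b - a := by linarith
  have hX : 0 < X := by linarith
  have hw1 : ww c A ≤ 2 / η := by rw [le_div_iff₀ hη]; exact hwη.le
  have hw2 : ww c A ^ 2 / 4 ≤ 1 / η ^ 2 := by
    calc ww c A ^ 2 / 4 ≤ (2 / η) ^ 2 / 4 := by gcongr
      _ = 1 / η ^ 2 := by field_simp; norm_num
  have hv0 : 0 < vv b η c X A := hη.trans h4
  have p1 : 0 < 1 / (b - a) := by positivity
  have p2 : 0 < 2 / η := by positivity
  have p3 : 0 < 2 * b / η ^ 2 := by positivity
  have p4 : 0 < 1 / η ^ 2 := by positivity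
  have e1 : vv b η c X A * ww c A ≤ 2 / η := by
    calc _ ≤ 1 * (2 / η) := by gcongr
      _ = _ := one_mul _
  have e1' : 0 < vv b η c X A * ww c A := mul_pos hv0 hw
  have e2 : 2 * (ww c A ^ 2 / 4) * X ≤ 2 * b / η ^ 2 := by
    calc _ ≤ 2 * (1 / η ^ 2) * b := by gcongr
      _ = _ := by ring
  have e2' : 0 < 2 * (ww c A ^ 2 / 4) * X := by positivity
  constructor
  · unfold pc
    rw [abs_le]; constructor <;> linarith
  · unfold qc
    rw [abs_of_nonneg (by positivity)]
    linarith

lemma good_step {a b η c X A X' A' : ℝ} (hη : 0 < η) (hη1 : η ≤ 1)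
    (h : OKst a b η c X A) (hg : GoodSt η X A X' A') (hA : A ≤ A') :
    0 < vv b η c X' A' ∧ vv b η c X' A' ≤ 1 ∧
    pc a b η c X A * (X' - X) + qc c A * ((X' ^ 2 - A') - (X ^ 2 - A))
      ≤ Phi a b η c X' A' - Phi a b η c X A + η * (A' - A) ∧ 0 < c - A' := by
  obtain ⟨hw, hwη, hu, hv1⟩ := ok_facts hη h
  obtain ⟨h1, h2, h3, h4⟩ := h
  obtain ⟨g1, g2⟩ := hg
  obtain ⟨w1, w2, w3⟩ := w_step η (c - A) (A' - A) hη hη1 hu (by linarith) g2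
  rw [show c - A - (A' - A) = c - A' by ring] at w1 w2 w3
  obtain ⟨s1, s2, s3⟩ := step_core η (b + η - X) (ww c A) (vv b η c X A) (X' - X) (A' - A)
    (ww c A') hη hη1 (by linarith) hw rfl h4 g1 (by linarith) g2 w2 w3
  have e : 1 - ww c A' * (b + η - X - (X' - X)) / 2 = vv b η c X' A' := by unfold vv; ring
  rw [e] at s1 s2 s3
  refine ⟨s1, s2, ?_, w1⟩
  have e2 : pc a b η c X A * (X' - X) + qc c A * ((X' ^ 2 - A') - (X ^ 2 - A))
      = (X' - X) / (b - a) + (vv b η c X A * ww c A * (X' - X)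
        + ww c A ^ 2 / 4 * ((X' - X) ^ 2 - (A' - A))) := by unfold pc qc; ring
  have e3 : Phi a b η c X' A' - Phi a b η c X A = (X' - X) / (b - a)
      + vv b η c X' A' ^ 2 - vv b η c X A ^ 2 := by unfold Phi; ring
  rw [e2, e3]
  linarith

lemma run_facts {a b η c : ℝ} {X A : ℕ → ℝ} {i : ℕ} (h : RunSt a b η c X A i) :
    (∀ j ≤ i, OKst a b η c (X j) (A j)) ∧
    (∀ j < i, GoodSt η (X j) (A j) (X (j + 1)) (A (j + 1))) := by
  induction i with
  | zero => exact ⟨fun j hj => by rw [Nat.le_zero.mp hj]; exact h, fun j hj => by omega⟩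
  | succ i ih =>
    obtain ⟨h1, h2, h3⟩ := h
    obtain ⟨i1, i2⟩ := ih h1
    refine ⟨fun j hj => ?_, fun j hj => ?_⟩
    · rcases Nat.lt_or_ge i j with h | h
      · rw [show j = i + 1 by omega]; exact h3
      · exact i1 j h
    · rcases Nat.lt_or_ge j i with h | h
      · exact i2 j h
      · rw [show j = i by omega]; exact h2

noncomputable def Cb (a b η : ℝ) : ℝ := 1 / (b - a) + 2 / η + 2 * b / η ^ 2 + 1 / η ^ 2
noncomputable def Bd (a b η c mT nT : ℝ) : ℝ :=
  (3 + 1 / (b - a) + c + Cb a b η * (b + b ^ 2 + c)) + Cb a b η * (|mT| + |nT|)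

lemma bad_bound {a b η c X A mT nT : ℝ} (hη : 0 < η) (ha : 0 < a) (hab : a < b)
    (h : OKst a b η c X A) (hA : 0 ≤ A) :
    pc a b η c X A * (mT - X) + qc c A * (nT - (X ^ 2 - A))
      ≤ Cb a b η * (b + b ^ 2 + c) + Cb a b η * (|mT| + |nT|) := by
  obtain ⟨c1, c2⟩ := coef_bound hη ha hab h
  obtain ⟨h1, h2, h3, h4⟩ := h
  change _ ≤ Cb a b η at c1
  change _ ≤ Cb a b η at c2
  have hC : 0 ≤ Cb a b η := (abs_nonneg _).trans c1
  have b1 : |mT - X| ≤ |mT| + b := by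
    refine (abs_sub _ _).trans ?_
    rw [abs_of_pos (show 0 < X by linarith)]; linarith
  have b2 : |nT - (X ^ 2 - A)| ≤ |nT| + (b ^ 2 + c) := by
    refine (abs_sub _ _).trans ?_
    have : |X ^ 2 - A| ≤ b ^ 2 + c := by
      rw [abs_le]; constructor <;> nlinarith
    linarith
  have e1 : pc a b η c X A * (mT - X) ≤ Cb a b η * (|mT| + b) := by
    refine (le_abs_self _).trans ?_
    rw [abs_mul]; gcongr
  have e2 : qc c A * (nT - (X ^ 2 - A)) ≤ Cb a b η * (|nT| + (b ^ 2 + c)) := by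
    refine (le_abs_self _).trans ?_
    rw [abs_mul]; gcongr
  linarith

lemma path_claim {a b η c mT nT : ℝ} {X A : ℕ → ℝ} (hη : 0 < η) (hη1 : η ≤ 1) (ha : 0 < a)
    (hab : a < b) (hok : OKst a b η c (X 0) (A 0)) (hA0 : A 0 = 0) (hA : Monotone A) (i : ℕ) :
    (RunSt a b η c X A i ∧ ∑ j ∈ Finset.range i, Ys a b η c mT nT X A j
        ≤ Phi a b η c (X i) (A i) - Phi a b η c (X 0) (A 0) + η * A i) ∨
    (¬ RunSt a b η c X A i ∧ ∃ k, k < i ∧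
      (∀ j ≤ k, OKst a b η c (X j) (A j)) ∧
      (∀ j ≤ k, GoodSt η (X j) (A j) (X (j + 1)) (A (j + 1))) ∧
      ¬ OKst a b η c (X (k + 1)) (A (k + 1)) ∧
      ∑ j ∈ Finset.range i, Ys a b η c mT nT X A j
        ≤ Phi a b η c (X (k + 1)) (A (k + 1)) - Phi a b η c (X 0) (A 0) + η * A (k + 1)) ∨
    (¬ RunSt a b η c X A i ∧ ∃ k, k < i ∧ ¬ GoodSt η (X k) (A k) (X (k + 1)) (A (k + 1)) ∧
      ∑ j ∈ Finset.range i, Ys a b η c mT nT X A j ≤ Bd a b η c mT nT) := by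
  have hba : 0 < b - a := by linarith
  induction i with
  | zero =>
    left
    exact ⟨hok, by simp [hA0]⟩
  | succ i ih =>
    rcases ih with ⟨hr, hs⟩ | ⟨hr, k, hk, k1, k2, k3, k4⟩ | ⟨hr, k, hk, k1, k2⟩
    · obtain ⟨r1, r2⟩ := run_facts hr
      have hoki := r1 i le_rfl
      by_cases hg : GoodSt η (X i) (A i) (X (i + 1)) (A (i + 1))
      · obtain ⟨g1, g2, g3, g4⟩ := good_step hη hη1 hoki hg (hA (Nat.le_succ i))
        have hsum : ∑ j ∈ Finset.range (i + 1), Ys a b η c mT nT X A j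
          ≤ Phi a b η c (X (i + 1)) (A (i + 1)) - Phi a b η c (X 0) (A 0) + η * A (i + 1) := by
          rw [Finset.sum_range_succ]
          have : Ys a b η c mT nT X A i = pc a b η c (X i) (A i) * (X (i + 1) - X i)
            + qc c (A i) * ((X (i + 1) ^ 2 - A (i + 1)) - (X i ^ 2 - A i)) := by
            unfold Ys; rw [if_pos hr, if_pos hg, add_zero]
          rw [this]
          linarith
        by_cases ho : OKst a b η c (X (i + 1)) (A (i + 1))
        · left; exact ⟨⟨hr, hg, ho⟩, hsum⟩
        · right; left
          refine ⟨fun h => ho h.2.2, i, Nat.lt_succ_self i, r1, ?_, ho, hsum⟩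
          intro j hj
          rcases Nat.lt_or_ge j i with h | h
          · exact r2 j h
          · rw [show j = i by omega]; exact hg
      · right; right
        refine ⟨fun h => hg h.2.1, i, Nat.lt_succ_self i, hg, ?_⟩
        rw [Finset.sum_range_succ]
        have : Ys a b η c mT nT X A i = pc a b η c (X i) (A i) * (mT - X i)
            + qc c (A i) * (nT - (X i ^ 2 - A i)) := by
          unfold Ys; rw [if_pos hr, if_neg hg]; ring
        rw [this]
        have hAi : 0 ≤ A i := by rw [← hA0]; exact hA (Nat.zero_le i)
        have hb := bad_bound (mT := mT) (nT := nT) hη ha hab hoki hAi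
        obtain ⟨-, -, -, hv1⟩ := ok_facts hη hoki
        obtain ⟨h1, h2, h3, h4⟩ := hoki
        have hP0 : -1 ≤ Phi a b η c (X 0) (A 0) := by
          have h5 : 0 < (X 0 - a) / (b - a) := div_pos (by linarith [hok.1]) hba
          unfold Phi
          nlinarith [sq_nonneg (vv b η c (X 0) (A 0))]
        have hP : Phi a b η c (X i) (A i) ≤ 1 := by
          have h5 : (X i - a) / (b - a) ≤ 1 := by rw [div_le_one hba]; linarith
          unfold Phi
          nlinarith
        have : η * A i ≤ c := by nlinarith
        have : 0 < 1 / (b - a) := by positivity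
        unfold Bd
        linarith
    · right; left
      refine ⟨fun h => hr h.1, k, by omega, k1, k2, k3, ?_⟩
      rw [Finset.sum_range_succ]
      have : Ys a b η c mT nT X A i = 0 := by unfold Ys; rw [if_neg hr]
      rw [this, add_zero]; exact k4
    · right; right
      refine ⟨fun h => hr h.1, k, by omega, k1, ?_⟩
      rw [Finset.sum_range_succ]
      have : Ys a b η c mT nT X A i = 0 := by unfold Ys; rw [if_neg hr]
      rw [this, add_zero]; exact k2

/-- pathwise upper bound -/
lemma path_dom {a b η c mT nT : ℝ} {X A : ℕ → ℝ} (hη : 0 < η) (hη1 : η ≤ 1) (ha : 0 < a)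
    (hab : a < b) (hok : OKst a b η c (X 0) (A 0)) (hA0 : A 0 = 0) (hA : Monotone A) (i : ℕ) :
    ∑ j ∈ Finset.range i, Ys a b η c mT nT X A j ≤ Bd a b η c mT nT := by
  have hba : 0 < b - a := by linarith
  have hp : 0 < 1 / (b - a) := by positivity
  have hP0 : -1 ≤ Phi a b η c (X 0) (A 0) := by
    have h5 : 0 < (X 0 - a) / (b - a) := div_pos (by linarith [hok.1]) hba
    unfold Phi
    nlinarith [sq_nonneg (vv b η c (X 0) (A 0))]
  have hc : 0 < c := by have := hok.2.2.1; rw [hA0] at this; linarith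
  have hC : 0 ≤ Cb a b η := by
    have : 0 < b := by linarith
    unfold Cb; positivity
  have hBd : 3 + 1 / (b - a) + c ≤ Bd a b η c mT nT := by
    have : 0 < b := by linarith
    have : 0 ≤ Cb a b η * (b + b ^ 2 + c) := by positivity
    have : 0 ≤ Cb a b η * (|mT| + |nT|) := by positivity
    unfold Bd; linarith
  rcases path_claim (mT := mT) (nT := nT) hη hη1 ha hab hok hA0 hA i with
    ⟨hr, hs⟩ | ⟨hr, k, hk, k1, k2, k3, k4⟩ | ⟨hr, k, hk, k1, k2⟩
  · have hoki := (run_facts hr).1 i le_rfl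
    obtain ⟨-, -, -, hv1⟩ := ok_facts hη hoki
    obtain ⟨h1, h2, h3, h4⟩ := hoki
    have hAi : 0 ≤ A i := by rw [← hA0]; exact hA (Nat.zero_le i)
    have hP : Phi a b η c (X i) (A i) ≤ 1 := by
      have h5 : (X i - a) / (b - a) ≤ 1 := by rw [div_le_one hba]; linarith
      unfold Phi
      nlinarith
    have : η * A i ≤ c := by nlinarith
    linarith
  · obtain ⟨g1, g2, -, g4⟩ := good_step hη hη1 (k1 k le_rfl) (k2 k le_rfl) (hA (Nat.le_succ k))
    obtain ⟨h1, h2, h3, h4⟩ := k1 k le_rfl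
    have hAi : 0 ≤ A (k + 1) := by rw [← hA0]; exact hA (Nat.zero_le _)
    have hg := (abs_le.mp (k2 k le_rfl).1).2
    have hη5 : η ^ 5 ≤ 1 := pow_le_one₀ hη.le hη1
    have hP : Phi a b η c (X (k + 1)) (A (k + 1)) ≤ 1 + 1 / (b - a) := by
      have h5 : (X (k + 1) - a) / (b - a) ≤ 1 + 1 / (b - a) := by
        rw [div_le_iff₀ hba, add_mul, one_div_mul_cancel hba.ne']; linarith
      unfold Phi
      nlinarith
    have : η * A (k + 1) ≤ c := by nlinarith
    linarith
  · exact k2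

lemma ok_strict {a b η c X A : ℝ} (hη : 0 < η) (h : OKst a b η c X A) :
    η ^ 2 / 4 < c - A := by
  obtain ⟨hw, hwη, -, -⟩ := ok_facts hη h
  obtain ⟨h1, h2, h3, h4⟩ := h
  have hs := Real.sqrt_pos.mpr h3
  have : η < 2 * √(c - A) := by
    unfold ww at hwη
    rw [inv_mul_eq_div, div_lt_iff₀ hs] at hwη
    exact hwη
  have h5 := Real.sq_sqrt h3.le
  nlinarith

/-- Grid times. -/
noncomputable def gt (T : ℝ) (n i : ℕ) : ℝ := i * (T / (n + 1))

lemma gt_mono {T : ℝ} (hT : 0 < T) (n : ℕ) : Monotone (gt T n) := by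
  intro i j h
  unfold gt
  have : (i : ℝ) ≤ j := by exact_mod_cast h
  gcongr

lemma gt_last (T : ℝ) (n : ℕ) : gt T n (n + 1) = T := by
  unfold gt
  have : (n : ℝ) + 1 ≠ 0 := by positivity
  push_cast
  field_simp

lemma gt_near {T : ℝ} (hT : 0 < T) (n k : ℕ) (t : ℝ) (ht : 0 ≤ t) (htk : t ≤ gt T n (k + 1)) :
    ∃ j ≤ k, |t - gt T n j| ≤ T / (n + 1) := by
  induction k with
  | zero =>
    refine ⟨0, le_rfl, ?_⟩
    simp only [gt, Nat.cast_zero, zero_mul, sub_zero, zero_add, Nat.cast_one, one_mul] at *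
    rw [abs_of_nonneg ht]; exact htk
  | succ k ih =>
    by_cases h : t ≤ gt T n (k + 1)
    · obtain ⟨j, hj, hj'⟩ := ih h
      exact ⟨j, by omega, hj'⟩
    · refine ⟨k + 1, le_rfl, ?_⟩
      push Not at h
      rw [abs_of_nonneg (by linarith)]
      have : gt T n (k + 1 + 1) = gt T n (k + 1) + T / (n + 1) := by
        unfold gt; push_cast; ring
      linarith

lemma unif {T ρ : ℝ} (hT : 0 < T) (hρ : 0 < ρ) {m : ℝ → ℝ} (hm : Continuous m) :
    ∀ᶠ n : ℕ in Filter.atTop, ∀ u ∈ Set.Icc 0 T, ∀ v ∈ Set.Icc 0 T, |u - v| ≤ T / (n + 1) →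
      |m u - m v| ≤ ρ := by
  have h := isCompact_Icc.uniformContinuousOn_of_continuous (hm.continuousOn (s := Set.Icc 0 T))
  rw [Metric.uniformContinuousOn_iff] at h
  obtain ⟨δ, hδ, h⟩ := h ρ hρ
  have h2 : Filter.Tendsto (fun n : ℕ => T / ((n : ℝ) + 1)) Filter.atTop (nhds 0) :=
    tendsto_const_div_atTop_nhds_zero_nat T |>.comp (Filter.tendsto_add_atTop_nat 1) |>.congr
      (fun n => by simp)
  filter_upwards [h2.eventually (gt_mem_nhds hδ)] with n hn u hu v hv huv
  have := h u hu v hv (by rw [Real.dist_eq]; linarith)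
  rw [Real.dist_eq] at this
  exact this.le

lemma path_final {a b η s T x : ℝ} {m A : ℝ → ℝ} (hη : 0 < η) (hη1 : η ≤ 1) (ha : 0 < a)
    (hab : a < b) (hT : 0 < T) (hm : Continuous m) (hAc : Continuous A) (hA : Monotone A)
    (hm0 : m 0 = x) (hA0 : A 0 = 0) (hok : OKst a b η (s + η ^ 2 / 4) x 0)
    (hs : (∀ t ∈ Set.Icc 0 T, a ≤ m t) → s ≤ A T) :
    ∀ᶠ n : ℕ in Filter.atTop, ∀ mT nT : ℝ,
      (m (min (sInf {t : ℝ | 0 ≤ t ∧ (m t = a ∨ m t = b)}) T) = b ∧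
        ∑ j ∈ Finset.range (n + 1), Ys a b η (s + η ^ 2 / 4) mT nT
          (fun i => m (gt T n i)) (fun i => A (gt T n i)) j
        ≤ 1 + (2 * η / (b - a) + η + η * (s + η ^ 2 / 4)) - Phi a b η (s + η ^ 2 / 4) x 0) ∨
      ∑ j ∈ Finset.range (n + 1), Ys a b η (s + η ^ 2 / 4) mT nT
          (fun i => m (gt T n i)) (fun i => A (gt T n i)) j
        ≤ (2 * η / (b - a) + η + η * (s + η ^ 2 / 4)) - Phi a b η (s + η ^ 2 / 4) x 0 := by
  have hba : 0 < b - a := by linarith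
  have hρ : 0 < η ^ 5 / 100 := by positivity
  have hη5 : η ^ 5 ≤ η := by
    calc η ^ 5 ≤ η ^ 1 := pow_le_pow_of_le_one hη.le hη1 (by norm_num)
      _ = η := pow_one _
  filter_upwards [unif hT hρ hm, unif hT hρ hAc] with n hn1 hn2 mT nT
  set c := s + η ^ 2 / 4 with hc
  have g0 : gt T n 0 = 0 := by simp [gt]
  have gpos : ∀ i, 0 ≤ gt T n i := fun i => g0 ▸ gt_mono hT n (Nat.zero_le i)
  have gle : ∀ i ≤ n + 1, gt T n i ≤ T := fun i hi => (gt_mono hT n hi).trans_eq (gt_last T n)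
  have gstep : ∀ i, gt T n (i + 1) - gt T n i = T / (n + 1) := by
    intro i; unfold gt; push_cast; ring
  have hTn : 0 < T / ((n : ℝ) + 1) := by positivity
  have hgood : ∀ i < n + 1, GoodSt η (m (gt T n i)) (A (gt T n i)) (m (gt T n (i + 1)))
      (A (gt T n (i + 1))) := by
    intro i hi
    have m1 : gt T n i ∈ Set.Icc 0 T := ⟨gpos i, gle i hi.le⟩
    have m2 : gt T n (i + 1) ∈ Set.Icc 0 T := ⟨gpos _, gle _ hi⟩
    have m3 : |gt T n (i + 1) - gt T n i| ≤ T / (n + 1) := by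
      rw [gstep, abs_of_pos hTn]
    exact ⟨hn1 _ m2 _ m1 m3, (le_abs_self _).trans (hn2 _ m2 _ m1 m3)⟩
  -- lower bound between grid points
  have hlow : ∀ k ≤ n, (∀ j ≤ k, OKst a b η c (m (gt T n j)) (A (gt T n j))) →
      ∀ t, 0 ≤ t → t ≤ gt T n (k + 1) → a < m t := by
    intro k hk hj t ht0 ht1
    obtain ⟨j, hjk, hjt⟩ := gt_near hT n k t ht0 ht1
    have := hn1 t ⟨ht0, ht1.trans (gle _ (by omega))⟩ _ ⟨gpos j, gle j (by omega)⟩ hjt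
    have h1 := (hj j hjk).1
    have := (abs_le.mp this).1
    linarith
  have hok' : OKst a b η c (m (gt T n 0)) (A (gt T n 0)) := by rw [g0, hm0, hA0]; exact hok
  have hA0' : A (gt T n 0) = 0 := by rw [g0, hA0]
  have hc0 : 0 < c := by have := hok.2.2.1; linarith
  have key := path_claim (mT := mT) (nT := nT) (X := fun i => m (gt T n i))
    (A := fun i => A (gt T n i)) hη hη1 ha hab hok' hA0' (hA.comp (gt_mono hT n)) (n + 1)
  simp only [g0, hm0, hA0] at key
  rcases key with ⟨hr, -⟩ | ⟨-, k, hk, k1, k2, k3, k4⟩ | ⟨-, k, hk, k1, -⟩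
  · exfalso
    have r1 := (run_facts hr).1
    have h1 : s ≤ A T := by
      apply hs
      intro t ht
      refine (hlow n le_rfl (fun j hj => r1 j (by omega)) t ht.1 ?_).le
      rw [gt_last]; exact ht.2
    have h2 := ok_strict hη (r1 (n + 1) le_rfl)
    simp only [gt_last] at h2
    linarith
  · obtain ⟨p1, p2, -, p4⟩ := good_step hη hη1 (k1 k le_rfl) (k2 k le_rfl)
      (hA (gt_mono hT n (Nat.le_succ k)))
    have hAk : η * A (gt T n (k + 1)) ≤ η * c := by gcongr; linarith
    have hη0 : 0 < 2 * η / (b - a) := by positivity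
    have hXk := (abs_le.mp (k2 k le_rfl).1).2
    have hXb := (k1 k le_rfl).2.1
    by_cases hXk1 : b ≤ m (gt T n (k + 1))
    · left
      have hlow' := hlow k (by omega) k1
      constructor
      · have hne : ∃ t ∈ Set.Icc 0 (gt T n (k + 1)), m t = b := by
          have := intermediate_value_Icc (gpos (k + 1)) (hm.continuousOn)
          apply this
          exact ⟨by rw [hm0]; exact hok.2.1.le, hXk1⟩
        obtain ⟨t0, ⟨t1, t2⟩, t3⟩ := hne
        set S := {t : ℝ | 0 ≤ t ∧ (m t = a ∨ m t = b)} with hS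
        have hScl : IsClosed S := by
          have : S = Set.Ici 0 ∩ (m ⁻¹' {a} ∪ m ⁻¹' {b}) := by ext; simp [hS]
          rw [this]
          exact isClosed_Ici.inter ((isClosed_singleton.preimage hm).union
            (isClosed_singleton.preimage hm))
        have hSb : BddBelow S := ⟨0, fun t ht => ht.1⟩
        have ht0 : t0 ∈ S := ⟨t1, Or.inr t3⟩
        have hmem := hScl.csInf_mem ⟨t0, ht0⟩ hSb
        have hle : sInf S ≤ gt T n (k + 1) := (csInf_le hSb ht0).trans t2
        rw [min_eq_left (hle.trans (gle _ (by omega)))]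
        rcases hmem with ⟨q1, q2 | q2⟩
        · have := hlow' _ q1 hle
          linarith
        · exact q2
      · have hP : Phi a b η c (m (gt T n (k + 1))) (A (gt T n (k + 1))) ≤ 1 + 2 * η / (b - a) := by
          have h5 : (m (gt T n (k + 1)) - a) / (b - a) ≤ 1 + 2 * η / (b - a) := by
            rw [div_le_iff₀ hba, add_mul, div_mul_cancel₀ _ hba.ne']; linarith
          unfold Phi
          nlinarith
        linarith
    · right
      push Not at hXk1
      have hP : Phi a b η c (m (gt T n (k + 1))) (A (gt T n (k + 1)))
          ≤ 2 * η / (b - a) + η := by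
        by_cases hl : m (gt T n (k + 1)) ≤ a + η
        · have h5 : (m (gt T n (k + 1)) - a) / (b - a) ≤ 2 * η / (b - a) := by
            gcongr; linarith
          unfold Phi
          nlinarith
        · have hv : vv b η c (m (gt T n (k + 1))) (A (gt T n (k + 1))) ≤ η := by
            by_contra hcon
            push Not at hl hcon
            exact k3 ⟨hl, hXk1, p4, hcon⟩
          have h5 : (m (gt T n (k + 1)) - a) / (b - a) ≤ 1 := by
            rw [div_le_one hba]; linarith
          unfold Phi
          nlinarith
      linarith
  · exact absurd (hgood k hk) k1

lemma int_zero {Ω : Type*} {m0 : MeasurableSpace Ω} {P : Measure Ω} [IsProbabilityMeasure P]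
    {ℱ : Filtration ℝ m0} {M : ℝ → Ω → ℝ} (hM : Martingale M ℱ P) {s t C : ℝ} (hst : s ≤ t)
    {ξ : Ω → ℝ} (hξ : Measurable[ℱ s] ξ) (hb : ∀ ω, |ξ ω| ≤ C) :
    Integrable (fun ω => ξ ω * (M t ω - M s ω)) P ∧ ∫ ω, ξ ω * (M t ω - M s ω) ∂P = 0 := by
  have hξs : StronglyMeasurable[ℱ s] ξ := Measurable.stronglyMeasurable hξ
  have hξ' : AEStronglyMeasurable ξ P := (hξs.mono (ℱ.le s)).aestronglyMeasurable
  have hi : Integrable (fun ω => M t ω - M s ω) P := (hM.integrable t).sub (hM.integrable s)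
  have hbd : ∀ᵐ ω ∂P, ‖ξ ω‖ ≤ C := Filter.Eventually.of_forall hb
  refine ⟨hi.bdd_mul hξ' hbd, ?_⟩
  have h1 := condExp_stronglyMeasurable_mul_of_bound (ℱ.le s) hξs hi C hbd
  have h2 : P[fun ω => M t ω - M s ω | ℱ s] =ᵐ[P] 0 := by
    have e := condExp_sub (hM.integrable t) (hM.integrable s) (ℱ s)
    have e1 := hM.condExp_ae_eq hst
    have e2 := hM.condExp_ae_eq (le_refl s)
    change P[M t - M s | ℱ s] =ᵐ[P] 0
    filter_upwards [e, e1, e2] with ω h h1 h2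
    rw [h, Pi.sub_apply, h1, h2]; simp
  have h3 : P[ξ * (fun ω => M t ω - M s ω) | ℱ s] =ᵐ[P] 0 := by
    filter_upwards [h1, h2] with ω h h'
    rw [h, Pi.mul_apply, h']; simp
  calc ∫ ω, ξ ω * (M t ω - M s ω) ∂P
      = ∫ ω, (P[ξ * (fun ω => M t ω - M s ω) | ℱ s]) ω ∂P := (integral_condExp (ℱ.le s)).symm
    _ = ∫ ω, (0 : Ω → ℝ) ω ∂P := integral_congr_ae h3
    _ = 0 := by simp

lemma meas_ww {Ω : Type*} {m : MeasurableSpace Ω} {A : Ω → ℝ} (hA : Measurable A) (c : ℝ) :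
    Measurable (fun ω => ww c (A ω)) := by
  unfold ww
  exact ((measurable_const.sub hA).sqrt).inv

lemma meas_vv {Ω : Type*} {m : MeasurableSpace Ω} {X A : Ω → ℝ} (hX : Measurable X)
    (hA : Measurable A) (b η c : ℝ) :
    Measurable (fun ω => vv b η c (X ω) (A ω)) := by
  unfold vv
  exact measurable_const.sub (((meas_ww hA c).mul (measurable_const.sub hX)).div_const 2)

lemma meas_pc {Ω : Type*} {m : MeasurableSpace Ω} {X A : Ω → ℝ} (hX : Measurable X)
    (hA : Measurable A) (a b η c : ℝ) :
    Measurable (fun ω => pc a b η c (X ω) (A ω)) := by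
  unfold pc
  exact (measurable_const.add ((meas_vv hX hA b η c).mul (meas_ww hA c))).sub
    ((measurable_const.mul (((meas_ww hA c).pow_const 2).div_const 4)).mul hX)

lemma meas_qc {Ω : Type*} {m : MeasurableSpace Ω} {A : Ω → ℝ} (hA : Measurable A) (c : ℝ) :
    Measurable (fun ω => qc c (A ω)) := by
  unfold qc
  exact (((meas_ww hA c).pow_const 2).div_const 4)

lemma meas_ok {Ω : Type*} {m : MeasurableSpace Ω} {X A : Ω → ℝ} (hX : Measurable X)
    (hA : Measurable A) (a b η c : ℝ) :
    MeasurableSet {ω | OKst a b η c (X ω) (A ω)} := by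
  unfold OKst
  exact (measurableSet_lt measurable_const hX).inter ((measurableSet_lt hX measurable_const).inter
    ((measurableSet_lt measurable_const (measurable_const.sub hA)).inter
      (measurableSet_lt measurable_const (meas_vv hX hA b η c))))

lemma meas_good {Ω : Type*} {m : MeasurableSpace Ω} {X A X' A' : Ω → ℝ} (hX : Measurable X)
    (hA : Measurable A) (hX' : Measurable X') (hA' : Measurable A') (η : ℝ) :
    MeasurableSet {ω | GoodSt η (X ω) (A ω) (X' ω) (A' ω)} := by
  unfold GoodSt
  exact (measurableSet_le (hX'.sub hX).abs measurable_const).inter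
    (measurableSet_le (hA'.sub hA) measurable_const)

lemma meas_run {Ω : Type*} {m0 : MeasurableSpace Ω} {ℱ : Filtration ℝ m0} {t : ℕ → ℝ}
    (ht : Monotone t) {X A : ℝ → Ω → ℝ}
    (hX : ∀ r, Measurable[ℱ r] (X r)) (hA : ∀ r, Measurable[ℱ r] (A r)) (a b η c : ℝ) (i : ℕ) :
    MeasurableSet[ℱ (t i)]
      {ω | RunSt a b η c (fun j => X (t j) ω) (fun j => A (t j) ω) i} := by
  induction i with
  | zero => exact meas_ok (hX _) (hA _) a b η c
  | succ i ih =>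
    have hle : ℱ (t i) ≤ ℱ (t (i + 1)) := ℱ.mono (ht (Nat.le_succ i))
    have h2 := @meas_good Ω (ℱ (t (i + 1))) _ _ _ _ ((hX (t i)).mono hle le_rfl)
      ((hA (t i)).mono hle le_rfl) (hX (t (i + 1))) (hA (t (i + 1))) η
    have h3 := @meas_ok Ω (ℱ (t (i + 1))) _ _ (hX (t (i + 1))) (hA (t (i + 1))) a b η c
    have h1 := hle _ ih
    exact @MeasurableSet.inter Ω (ℱ (t (i + 1))) _ _ h1
      (@MeasurableSet.inter Ω (ℱ (t (i + 1))) _ _ h2 h3)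

lemma Ys_int {Ω : Type*} {m0 : MeasurableSpace Ω} {P : Measure Ω} [IsProbabilityMeasure P]
    {ℱ : Filtration ℝ m0} {M QV : ℝ → Ω → ℝ} (hM : Martingale M ℱ P)
    (hN : Martingale (fun t ω => (M t ω) ^ 2 - QV t ω) ℱ P)
    {t : ℕ → ℝ} (ht : Monotone t) {T : ℝ} {i : ℕ} (hi : t (i + 1) ≤ T) {a b η c : ℝ}
    (hη : 0 < η) (ha : 0 < a) (hab : a < b) :
    Integrable (fun ω => Ys a b η c (M T ω) (M T ω ^ 2 - QV T ω) (fun j => M (t j) ω)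
      (fun j => QV (t j) ω) i) P ∧
    ∫ ω, Ys a b η c (M T ω) (M T ω ^ 2 - QV T ω) (fun j => M (t j) ω)
      (fun j => QV (t j) ω) i ∂P = 0 := by
  classical
  have hX : ∀ r, Measurable[ℱ r] (M r) := fun r => (hM.stronglyMeasurable r).measurable
  have hA : ∀ r, Measurable[ℱ r] (QV r) := by
    intro r
    have h1 : Measurable[ℱ r] (fun ω => (M r ω) ^ 2 - QV r ω) :=
      (hN.stronglyMeasurable r).measurable
    have h2 : Measurable[ℱ r] (fun ω => (M r ω) ^ 2) := (hX r).pow_const 2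
    have h3 := h2.sub h1
    have : QV r = (fun ω => (M r ω) ^ 2) - (fun ω => (M r ω) ^ 2 - QV r ω) := by
      funext ω; simp
    rw [this]; exact h3
  have hle : ℱ (t i) ≤ ℱ (t (i + 1)) := ℱ.mono (ht (Nat.le_succ i))
  set R := {ω | RunSt a b η c (fun j => M (t j) ω) (fun j => QV (t j) ω) i} with hR
  set G := {ω | GoodSt η (M (t i) ω) (QV (t i) ω) (M (t (i + 1)) ω) (QV (t (i + 1)) ω)} with hG
  have mR : MeasurableSet[ℱ (t i)] R := meas_run ht hX hA a b η c i
  have mG : MeasurableSet[ℱ (t (i + 1))] G :=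
    @meas_good Ω (ℱ (t (i + 1))) _ _ _ _ ((hX (t i)).mono hle le_rfl)
      ((hA (t i)).mono hle le_rfl) (hX (t (i + 1))) (hA (t (i + 1))) η
  have mR' : MeasurableSet[ℱ (t (i + 1))] (R \ G) :=
    @MeasurableSet.diff Ω (ℱ (t (i + 1))) _ _ (hle _ mR) mG
  have mp : Measurable[ℱ (t i)] (fun ω => pc a b η c (M (t i) ω) (QV (t i) ω)) :=
    meas_pc (hX _) (hA _) a b η c
  have mq : Measurable[ℱ (t i)] (fun ω => qc c (QV (t i) ω)) := meas_qc (hA _) c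
  set p := R.indicator (fun ω => pc a b η c (M (t i) ω) (QV (t i) ω)) with hp
  set q := R.indicator (fun ω => qc c (QV (t i) ω)) with hq
  set p' := (R \ G).indicator (fun ω => pc a b η c (M (t i) ω) (QV (t i) ω)) with hp'
  set q' := (R \ G).indicator (fun ω => qc c (QV (t i) ω)) with hq'
  have hC : 0 ≤ Cb a b η := by
    have : 0 < b := by linarith
    have : 0 < b - a := by linarith
    unfold Cb; positivity
  have hcb : ∀ ω ∈ R, |pc a b η c (M (t i) ω) (QV (t i) ω)| ≤ Cb a b η ∧
      |qc c (QV (t i) ω)| ≤ Cb a b η := fun ω hω =>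
    coef_bound hη ha hab ((run_facts hω).1 i le_rfl)
  have bp : ∀ ω, |p ω| ≤ Cb a b η := by
    intro ω; by_cases h : ω ∈ R
    · rw [hp, Set.indicator_of_mem h]; exact (hcb ω h).1
    · rw [hp, Set.indicator_of_notMem h]; simpa using hC
  have bq : ∀ ω, |q ω| ≤ Cb a b η := by
    intro ω; by_cases h : ω ∈ R
    · rw [hq, Set.indicator_of_mem h]; exact (hcb ω h).2
    · rw [hq, Set.indicator_of_notMem h]; simpa using hC
  have bp' : ∀ ω, |p' ω| ≤ Cb a b η := by
    intro ω; by_cases h : ω ∈ R \ G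
    · rw [hp', Set.indicator_of_mem h]; exact (hcb ω h.1).1
    · rw [hp', Set.indicator_of_notMem h]; simpa using hC
  have bq' : ∀ ω, |q' ω| ≤ Cb a b η := by
    intro ω; by_cases h : ω ∈ R \ G
    · rw [hq', Set.indicator_of_mem h]; exact (hcb ω h.1).2
    · rw [hq', Set.indicator_of_notMem h]; simpa using hC
  obtain ⟨i1, z1⟩ := int_zero hM (ht (Nat.le_succ i)) (mp.indicator mR) bp
  obtain ⟨i2, z2⟩ := int_zero hN (ht (Nat.le_succ i)) (mq.indicator mR) bq
  obtain ⟨i3, z3⟩ := int_zero hM hi ((mp.mono hle le_rfl).indicator mR') bp'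
  obtain ⟨i4, z4⟩ := int_zero hN hi ((mq.mono hle le_rfl).indicator mR') bq'
  have heq : (fun ω => Ys a b η c (M T ω) (M T ω ^ 2 - QV T ω) (fun j => M (t j) ω)
      (fun j => QV (t j) ω) i) = fun ω =>
      (p ω * (M (t (i + 1)) ω - M (t i) ω)
      + q ω * ((M (t (i + 1)) ω ^ 2 - QV (t (i + 1)) ω) - (M (t i) ω ^ 2 - QV (t i) ω)))
      + (p' ω * (M T ω - M (t (i + 1)) ω)
      + q' ω * ((M T ω ^ 2 - QV T ω) - (M (t (i + 1)) ω ^ 2 - QV (t (i + 1)) ω))) := by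
    funext ω
    unfold Ys
    by_cases h : ω ∈ R
    · rw [if_pos (show RunSt a b η c (fun j => M (t j) ω) (fun j => QV (t j) ω) i from h)]
      by_cases hg : ω ∈ G
      · have hn : ω ∉ R \ G := fun h => h.2 hg
        beta_reduce
        rw [if_pos (show GoodSt η (M (t i) ω) (QV (t i) ω) (M (t (i + 1)) ω) (QV (t (i + 1)) ω) from hg), hp, hq, hp', hq', Set.indicator_of_mem h, Set.indicator_of_mem h,
          Set.indicator_of_notMem hn, Set.indicator_of_notMem hn]
        ring
      · have hn : ω ∈ R \ G := ⟨h, hg⟩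
        beta_reduce
        rw [if_neg (show ¬ GoodSt η (M (t i) ω) (QV (t i) ω) (M (t (i + 1)) ω) (QV (t (i + 1)) ω) from hg), hp, hq, hp', hq', Set.indicator_of_mem h, Set.indicator_of_mem h,
          Set.indicator_of_mem hn, Set.indicator_of_mem hn]
    · have hn : ω ∉ R \ G := fun h' => h h'.1
      rw [if_neg (show ¬ RunSt a b η c (fun j => M (t j) ω) (fun j => QV (t j) ω) i from h),
        hp, hq, hp', hq', Set.indicator_of_notMem h, Set.indicator_of_notMem h,
          Set.indicator_of_notMem hn, Set.indicator_of_notMem hn]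
      ring
  rw [heq]
  refine ⟨(i1.add i2).add (i3.add i4), ?_⟩
  have e1 := integral_add (i1.add i2) (i3.add i4)
  have e2 := integral_add i1 i2
  have e3 := integral_add i3 i4
  simp only [Pi.add_apply] at e1
  rw [e1, e2, e3, z1, z2, z3, z4]
  norm_num

lemma eta_bound {Ω : Type*} {m0 : MeasurableSpace Ω} {P : Measure Ω} [IsProbabilityMeasure P]
    {ℱ : Filtration ℝ m0} {M QV : ℝ → Ω → ℝ} (hM : Martingale M ℱ P)
    (hN : Martingale (fun t ω => (M t ω) ^ 2 - QV t ω) ℱ P)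
    {a b η s T x : ℝ} (hη : 0 < η) (hη1 : η ≤ 1) (ha : 0 < a)
    (hab : a < b) (hT : 0 < T) (hcont : ∀ ω, Continuous fun t => M t ω)
    (hQc : ∀ ω, Continuous fun t => QV t ω) (hQm : ∀ ω, Monotone fun t => QV t ω)
    (hm0 : ∀ ω, M 0 ω = x) (hA0 : ∀ ω, QV 0 ω = 0) (hok : OKst a b η (s + η ^ 2 / 4) x 0)
    (hs : ∀ ω, (∀ t ∈ Set.Icc 0 T, a ≤ M t ω) → s ≤ QV T ω) :
    Phi a b η (s + η ^ 2 / 4) x 0 - (2 * η / (b - a) + η + η * (s + η ^ 2 / 4)) ≤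
      P.real {ω | M (min (sInf {t : ℝ | 0 ≤ t ∧ (M t ω = a ∨ M t ω = b)}) T) ω = b} := by
  set E := {ω | M (min (sInf {t : ℝ | 0 ≤ t ∧ (M t ω = a ∨ M t ω = b)}) T) ω = b} with hE
  set c := s + η ^ 2 / 4 with hc
  set δ := Phi a b η c x 0 - (2 * η / (b - a) + η + η * c) with hδ
  set E' := toMeasurable P E with hE'
  have mE' : MeasurableSet E' := measurableSet_toMeasurable P E
  have hPE : P.real E' = P.real E := by simp only [Measure.real, hE', measure_toMeasurable]
  set F : ℕ → Ω → ℝ := fun n ω => ∑ j ∈ Finset.range (n + 1), Ys a b η c (M T ω)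
    (M T ω ^ 2 - QV T ω) (fun i => M (gt T n i) ω) (fun i => QV (gt T n i) ω) j with hF
  have hFj : ∀ n, ∀ j ∈ Finset.range (n + 1), _ := fun n j hj =>
    Ys_int (c := c) hM hN (gt_mono hT n) (T := T) (i := j)
      ((gt_mono hT n (Nat.succ_le_of_lt (Finset.mem_range.mp hj))).trans_eq (gt_last T n)) hη ha hab
  have hFi : ∀ n, Integrable (F n) P := fun n =>
    integrable_finsetSum _ (fun j hj => (hFj n j hj).1)
  have hF0 : ∀ n, ∫ ω, F n ω ∂P = 0 := by
    intro n
    rw [hF, integral_finsetSum _ (fun j hj => (hFj n j hj).1)]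
    exact Finset.sum_eq_zero (fun j hj => (hFj n j hj).2)
  set tg : Ω → ℝ := fun ω => E'.indicator (fun _ => (1 : ℝ)) ω - δ with htg
  have hi1 : Integrable (E'.indicator (fun _ => (1 : ℝ))) P :=
    (integrable_const 1).indicator mE'
  have htgi : Integrable tg P := hi1.sub (integrable_const δ)
  have htgI : ∫ ω, tg ω ∂P = P.real E' - δ := by
    rw [htg, integral_sub hi1 (integrable_const δ), integral_indicator_const _ mE']
    simp
  set G : ℕ → Ω → ℝ := fun n ω => max (F n ω - tg ω) 0 with hG
  have hGi : ∀ n, Integrable (G n) P := fun n => ((hFi n).sub htgi).pos_part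
  set bd : Ω → ℝ := fun ω => |Bd a b η c (M T ω) (M T ω ^ 2 - QV T ω)| + |δ| with hbd
  have hbdi : Integrable bd P := by
    have h1 : Integrable (fun ω => Bd a b η c (M T ω) (M T ω ^ 2 - QV T ω)) P := by
      unfold Bd
      exact (integrable_const _).add
        (((hM.integrable T).abs.add (hN.integrable T).abs).const_mul _)
    exact h1.abs.add (integrable_const _)
  have hlim : Filter.Tendsto (fun n => ∫ ω, G n ω ∂P) Filter.atTop (nhds (∫ _ω, (0 : ℝ) ∂P)) := by
    refine tendsto_integral_of_dominated_convergence bd (fun n => (hGi n).aestronglyMeasurable)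
      hbdi (fun n => Filter.Eventually.of_forall fun ω => ?_)
      (Filter.Eventually.of_forall fun ω => ?_)
    · rw [Real.norm_eq_abs, abs_of_nonneg (le_max_right _ _)]
      refine max_le ?_ (by positivity)
      have h1 : F n ω ≤ Bd a b η c (M T ω) (M T ω ^ 2 - QV T ω) := by
        have g0 : gt T n 0 = 0 := by simp [gt]
        refine path_dom (X := fun i => M (gt T n i) ω) (A := fun i => QV (gt T n i) ω)
          hη hη1 ha hab ?_ ?_ ((hQm ω).comp (gt_mono hT n)) (n + 1)
        · beta_reduce; rw [g0, hm0, hA0]; exact hok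
        · beta_reduce; rw [g0, hA0]
      have h2 : 0 ≤ E'.indicator (fun _ => (1 : ℝ)) ω :=
        Set.indicator_nonneg (fun _ _ => zero_le_one) ω
      have h3 := le_abs_self (Bd a b η c (M T ω) (M T ω ^ 2 - QV T ω))
      have h4 := le_abs_self δ
      simp only [hbd, htg]
      linarith
    · refine tendsto_const_nhds.congr' ?_
      filter_upwards [path_final hη hη1 ha hab hT (hcont ω) (hQc ω) (hQm ω) (hm0 ω) (hA0 ω) hok
        (hs ω)] with n hn
      symm
      refine max_eq_right ?_
      have h2 : 0 ≤ E'.indicator (fun _ => (1 : ℝ)) ω :=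
        Set.indicator_nonneg (fun _ _ => zero_le_one) ω
      simp only [← hc] at hn
      rcases hn (M T ω) (M T ω ^ 2 - QV T ω) with ⟨h1, h⟩ | h
      · have hm : ω ∈ E' := subset_toMeasurable P E h1
        simp only [htg, hF, Set.indicator_of_mem hm]
        linarith
      · simp only [htg, hF]
        linarith
  have hineq : ∀ n, -(P.real E' - δ) ≤ ∫ ω, G n ω ∂P := by
    intro n
    have h1 : ∫ ω, F n ω ∂P - ∫ ω, tg ω ∂P ≤ ∫ ω, G n ω ∂P := by
      rw [← integral_sub (hFi n) htgi]
      exact integral_mono ((hFi n).sub htgi) (hGi n) (fun ω => le_max_left _ _)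
    rw [hF0, htgI] at h1
    linarith
  have := ge_of_tendsto' hlim hineq
  rw [integral_zero] at this
  rw [← hPE]
  linarith

lemma abs_bound {Ω : Type*} {m0 : MeasurableSpace Ω} {P : Measure Ω} [IsProbabilityMeasure P]
    {ℱ : Filtration ℝ m0} {M QV : ℝ → Ω → ℝ} (hM : Martingale M ℱ P)
    (hN : Martingale (fun t ω => (M t ω) ^ 2 - QV t ω) ℱ P)
    {a b s T x : ℝ} (ha : 0 < a) (hax : a < x) (hxb : x < b) (hs0 : 0 < s)
    (hT : 0 < T) (hcont : ∀ ω, Continuous fun t => M t ω)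
    (hQc : ∀ ω, Continuous fun t => QV t ω) (hQm : ∀ ω, Monotone fun t => QV t ω)
    (hm0 : ∀ ω, M 0 ω = x) (hA0 : ∀ ω, QV 0 ω = 0)
    (hs : ∀ ω, (∀ t ∈ Set.Icc 0 T, a ≤ M t ω) → s ≤ QV T ω) :
    (x - a) / (b - a) - (b - x) / √s ≤
      P.real {ω | M (min (sInf {t : ℝ | 0 ≤ t ∧ (M t ω = a ∨ M t ω = b)}) T) ω = b} := by
  have hba : 0 < b - a := by linarith
  have hss : 0 < √s := Real.sqrt_pos.mpr hs0
  by_cases htriv : 1 ≤ (b - x) / √s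
  · have : (x - a) / (b - a) ≤ 1 := by rw [div_le_one hba]; linarith
    have := measureReal_nonneg (μ := P)
      (s := {ω | M (min (sInf {t : ℝ | 0 ≤ t ∧ (M t ω = a ∨ M t ω = b)}) T) ω = b})
    linarith
  push Not at htriv
  rw [div_lt_one hss] at htriv
  set p := P.real {ω | M (min (sInf {t : ℝ | 0 ≤ t ∧ (M t ω = a ∨ M t ω = b)}) T) ω = b} with hp
  have key : ∀ η : ℝ, 0 < η → η < min (min (1 / 2) (x - a)) (√s - (b - x)) →
      (x - a) / (b - a) - (b + η - x) / √s - (2 * η / (b - a) + η + η * (s + η ^ 2 / 4)) ≤ p := by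
    intro η hη hlt
    obtain ⟨h12, h3⟩ := lt_min_iff.mp hlt
    obtain ⟨h1, h2⟩ := lt_min_iff.mp h12
    have hu : 0 < s + η ^ 2 / 4 - 0 := by rw [sub_zero]; positivity
    have hw : ww (s + η ^ 2 / 4) 0 ≤ (√s)⁻¹ := by
      unfold ww
      gcongr
      nlinarith [sq_nonneg η]
    have hw0 : 0 < ww (s + η ^ 2 / 4) 0 := inv_pos.mpr (Real.sqrt_pos.mpr hu)
    have hy0 : 0 < b + η - x := by linarith
    have hz : ww (s + η ^ 2 / 4) 0 * (b + η - x) ≤ (b + η - x) / √s := by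
      rw [div_eq_inv_mul (b + η - x)]; exact mul_le_mul_of_nonneg_right hw hy0.le
    have hz1 : (b + η - x) / √s < 1 := by rw [div_lt_one hss]; linarith
    have hok : OKst a b η (s + η ^ 2 / 4) x 0 := by
      refine ⟨by linarith, hxb, hu, ?_⟩
      unfold vv; linarith
    have := eta_bound hM hN hη (by linarith) ha (by linarith) hT hcont hQc hQm hm0 hA0 hok hs
    have hphi : (x - a) / (b - a) - (b + η - x) / √s ≤ Phi a b η (s + η ^ 2 / 4) x 0 := by
      unfold Phi vv
      nlinarith [sq_nonneg (ww (s + η ^ 2 / 4) 0 * (b + η - x))]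
    linarith
  have hlim : Filter.Tendsto (fun η : ℝ => (x - a) / (b - a) - (b + η - x) / √s
      - (2 * η / (b - a) + η + η * (s + η ^ 2 / 4))) (nhdsWithin 0 (Set.Ioi 0))
      (nhds ((x - a) / (b - a) - (b + 0 - x) / √s
      - (2 * 0 / (b - a) + 0 + 0 * (s + 0 ^ 2 / 4)))) := by
    refine Filter.Tendsto.mono_left (Continuous.tendsto ?_ 0) nhdsWithin_le_nhds
    fun_prop
  have h := le_of_tendsto hlim (b := p) (by
    have hpos : 0 < min (min (1 / 2) (x - a)) (√s - (b - x)) :=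
      lt_min (lt_min (by norm_num) (by linarith)) (by linarith)
    filter_upwards [Ioo_mem_nhdsGT hpos] with η hη
    exact key η hη.1 hη.2)
  simpa using h

/-- Lower bound on the probability that a continuous martingale with quadratic variation
bounded below by `c ∫₀ᵗ M(s)² ds`, `c = ζ₀σ²/L²`, hits the upper barrier `L·J₂` before
time `T` and before the lower barrier `L·J₀·e^{-Tα}`. -/
theorem hitting_probability_lower_bound_before_T
    {Ω : Type*} {m0 : MeasurableSpace Ω} {P : Measure Ω} [IsProbabilityMeasure P]
    (ℱ : Filtration ℝ m0) (M QV : ℝ → Ω → ℝ)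
    (L T α σ ζ₀ J₀ J₁ J₂ : ℝ)
    (hL : 0 < L) (hT : 0 < T) (hα : 0 < α) (hσ : 0 < σ) (hζ₀ : 0 < ζ₀)
    (h0 : 0 < J₀ * Real.exp (-T * α))
    (h01 : J₀ * Real.exp (-T * α) < J₁ * Real.exp (-T * α))
    (h1 : J₁ * Real.exp (-T * α) < J₁) (h12 : J₁ < J₂)
    (hM : Martingale M ℱ P)
    (hcont : ∀ ω : Ω, Continuous fun t : ℝ => M t ω)
    (hM0 : ∀ ω : Ω, M 0 ω = L * J₁ * Real.exp (-T * α))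
    -- `QV` is the quadratic variation of `M`:
    (hQVmart : Martingale (fun t ω => (M t ω) ^ 2 - QV t ω) ℱ P)
    (hQV0 : ∀ ω : Ω, QV 0 ω = 0)
    (hQVmono : ∀ ω : Ω, Monotone fun t : ℝ => QV t ω)
    (hQVcont : ∀ ω : Ω, Continuous fun t : ℝ => QV t ω)
    -- lower bound `⟨M⟩(t) ≥ (ζ₀σ²/L²) ∫₀ᵗ M(s)² ds`:
    (hQVlb : ∀ (t : ℝ) (ω : Ω), 0 ≤ t →
      (ζ₀ * σ ^ 2 / L ^ 2) * ∫ s in (0:ℝ)..t, (M s ω) ^ 2 ≤ QV t ω)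
    (τ : Ω → ℝ)
    (hτ : ∀ ω : Ω, τ ω = sInf {t : ℝ | 0 ≤ t ∧
      (M t ω = L * J₀ * Real.exp (-T * α) ∨ M t ω = L * J₂)}) :
    (J₁ - J₀) / (J₂ * Real.exp (T * α) - J₀)
      - ((J₂ / J₀) * Real.exp (T * α) - J₁ / J₀) * (L / (Real.sqrt ζ₀ * σ)) / Real.sqrt T
    ≤ (P {ω : Ω | M (min (τ ω) T) ω = L * J₂}).toReal := by
  set e := Real.exp (-T * α) with he
  have he0 : 0 < e := Real.exp_pos _
  have hinv : Real.exp (T * α) = e⁻¹ := by rw [he, ← Real.exp_neg]; congr 1; ring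
  have hJ0 : 0 < J₀ := pos_of_mul_pos_left h0 he0.le
  have hJ01 : J₀ < J₁ := lt_of_mul_lt_mul_right h01 he0.le
  set a := L * J₀ * e with ha
  set b := L * J₂ with hb
  set x := L * J₁ * e with hx
  have ha0 : 0 < a := by positivity
  have hax : a < x := by rw [ha, hx]; gcongr
  have hxb : x < b := by
    rw [hx, hb, mul_assoc]; exact mul_lt_mul_of_pos_left (h1.trans h12) hL
  set s := (ζ₀ * σ ^ 2 / L ^ 2) * (a ^ 2 * T) with hs
  have hs0 : 0 < s := by positivity
  have hss : √s = √ζ₀ * σ / L * a * √T := by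
    have : s = ζ₀ * (σ / L * a) ^ 2 * T := by rw [hs]; field_simp
    rw [this, Real.sqrt_mul (by positivity), Real.sqrt_mul hζ₀.le, Real.sqrt_sq (by positivity)]
    ring
  have main := abs_bound (s := s) hM hQVmart ha0 hax hxb hs0 hT hcont hQVcont hQVmono hM0 hQV0
    (by
      intro ω hω
      refine le_trans ?_ (hQVlb T ω hT.le)
      rw [hs]
      gcongr
      have hc : Continuous fun r => (M r ω) ^ 2 := (hcont ω).pow 2
      calc a ^ 2 * T = ∫ _r in (0:ℝ)..T, a ^ 2 := by simp [mul_comm]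
        _ ≤ ∫ r in (0:ℝ)..T, (M r ω) ^ 2 := by
          apply intervalIntegral.integral_mono_on hT.le (by simp) (hc.intervalIntegrable _ _)
          intro r hr
          have := hω r hr
          gcongr)
  simp only [hτ]
  refine le_trans (le_of_eq ?_) main
  rw [hss, hinv]
  have hT0 : 0 < √T := Real.sqrt_pos.mpr hT
  have hz0 : 0 < √ζ₀ := Real.sqrt_pos.mpr hζ₀
  have n1 : J₂ * e⁻¹ - J₀ = (b - a) / (L * e) := by rw [hb, ha]; field_simp
  have n2 : J₁ - J₀ = (x - a) / (L * e) := by rw [hx, ha]; field_simp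
  have n3 : J₂ / J₀ * e⁻¹ - J₁ / J₀ = (b - x) / a := by rw [hb, ha, hx]; field_simp
  have hLe : L * e ≠ 0 := by positivity
  rw [n1, n2, n3, div_div_div_cancel_right₀ hLe]
  congr 1
  field_simp
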